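/- Let 1 ≤ p < q ≤ m with q − p > 1, let D be a regular domain that is a (p, q)-hybrid* domain, and let D̄ = {P ∈ D : r_1(P) ∈ M}. Every unanimous and strategy-proof RSCF φ : D^n → Δ(A) behaves like a random dictatorship on D̄: there exist conditional dictatorial coefficients ε_i ≥ 0 for i ∈ N with Σ_{i∈N} ε_i = 1 such that φ(P) = Σ_{i∈N} ε_i e_{r_1(P_i)} for all P ∈ D̄^n. -/

import Mathlib

open Finset

noncomputable section

/-- A preference is a linear order over the `m` alternatives, represented as a bijection
from rank positions (0-based: position `0` is the top) to alternatives. -/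
abbrev Pref (m : ℕ) := Fin m ≃ Fin m

namespace PFBRPaper

variable {m n : ℕ}

/-- `a` is strictly preferred to `b` under `P`. -/
def Prefers (P : Pref m) (a b : Fin m) : Prop := P.symm a < P.symm b

/-- The last alternative `a_m` (0-based index `m-1`). -/
def lastAlt (m : ℕ) [NeZero m] : Fin m :=
  ⟨m - 1, Nat.sub_lt (Nat.pos_of_ne_zero (NeZero.ne m)) Nat.one_pos⟩

/-- Every alternative is top-ranked by some preference in the domain. -/
def MinimallyRich [NeZero m] (D : Set (Pref m)) : Prop :=
  ∀ a : Fin m, ∃ P ∈ D, P 0 = a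

/-- The preference ranking `a_m` first, ..., `a_1` last. -/
def revPref (m : ℕ) : Pref m :=
  ⟨Fin.rev, Fin.rev, fun i => Fin.rev_rev i, fun i => Fin.rev_rev i⟩

/-- Diversity, with the labeling convention: the domain contains the preference ranking
`a_1` first, `a_2` second, ..., `a_m` last (the identity), together with its
complete reversal. -/
def Diversity (D : Set (Pref m)) : Prop :=
  Equiv.refl (Fin m) ∈ D ∧ revPref m ∈ D

/-- Two preferences are adjacent: the alternatives at two contiguous rank positions are
swapped and everything else is unchanged. -/
def Adjacent (P P' : Pref m) : Prop :=
  P ≠ P' ∧ ∃ k : ℕ, ∃ hk : k + 1 < m,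
    P ⟨k, Nat.lt_of_succ_lt hk⟩ = P' ⟨k + 1, hk⟩ ∧
    P ⟨k + 1, hk⟩ = P' ⟨k, Nat.lt_of_succ_lt hk⟩ ∧
    ∀ l : Fin m, (l : ℕ) ≠ k → (l : ℕ) ≠ k + 1 → P l = P' l

/-- `π 0, …, π (v-1)` is a path in `D` connecting `P` and `P'`. -/
def IsPath (D : Set (Pref m)) (P P' : Pref m) (π : ℕ → Pref m) (v : ℕ) : Prop :=
  1 ≤ v ∧ (∀ i < v, π i ∈ D) ∧
  (∀ i < v, ∀ j < v, π i = π j → i = j) ∧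
  π 0 = P ∧ π (v - 1) = P' ∧
  ∀ i, i + 1 < v → Adjacent (π i) (π (i + 1))

/-- The path `π 0, …, π (v-1)` has no `{a,b}`-restoration: the relative ranking of
`a` and `b` switches at most once along the path. -/
def NoRestoration (π : ℕ → Pref m) (v : ℕ) (a b : Fin m) : Prop :=
  ∀ i j k : ℕ, i < j → j < k → k < v →
    ¬(Prefers (π i) a b ∧ Prefers (π j) b a ∧ Prefers (π k) a b) ∧
    ¬(Prefers (π i) b a ∧ Prefers (π j) a b ∧ Prefers (π k) b a)

def NoRestorationDomain (D : Set (Pref m)) : Prop :=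
  ∀ P ∈ D, ∀ P' ∈ D, P ≠ P' → ∀ a b : Fin m,
    ∃ π v, IsPath D P P' π v ∧ NoRestoration π v a b

def RegularDomain [NeZero m] (D : Set (Pref m)) : Prop :=
  MinimallyRich D ∧ Diversity D ∧ NoRestorationDomain D

/-- `a ≈ b`: the two alternatives are strongly connected in the domain `D`. -/
def StronglyConnected [NeZero m] (D : Set (Pref m)) (a b : Fin m) : Prop :=
  a ≠ b ∧ ∃ P ∈ D, ∃ P' ∈ D,
    P 0 = a ∧ P 1 = b ∧ P' 0 = b ∧ P' 1 = a ∧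
    ∀ k : Fin m, 2 ≤ (k : ℕ) → P k = P' k

/-- `l` is a vertex-path of the graph `G_≈^B(D)`. -/
def IsVertexPathOn [NeZero m] (D : Set (Pref m)) (B : Set (Fin m)) (l : List (Fin m)) : Prop :=
  l ≠ [] ∧ l.Nodup ∧ (∀ x ∈ l, x ∈ B) ∧ l.Chain' (StronglyConnected D)

/-- `l` is a vertex-path of `G_≈^B(D)` connecting `a` and `b`. -/
def VertexPathBetween [NeZero m] (D : Set (Pref m)) (B : Set (Fin m)) (a b : Fin m)
    (l : List (Fin m)) : Prop :=
  IsVertexPathOn D B l ∧ l.head? = some a ∧ l.getLast? = some b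

/-- `a` is a leaf of the subgraph `G_≈^B(D)`. -/
def IsLeaf [NeZero m] (D : Set (Pref m)) (B : Set (Fin m)) (a : Fin m) : Prop :=
  a ∈ B ∧ ∃! b : Fin m, b ∈ B ∧ StronglyConnected D a b

/-- Single-peakedness w.r.t. the natural order. -/
def SinglePeaked [NeZero m] (P : Pref m) : Prop :=
  ∀ a b : Fin m, ((a < b ∧ b < P 0) ∨ (P 0 < b ∧ b < a)) → Prefers P b a

/-- A `(p,q)`-hybrid preference (thresholds `p < q`, 0-based). -/
def IsHybridPref [NeZero m] (p q : Fin m) (P : Pref m) : Prop :=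
  (∀ r s : Fin m, ((r ≤ p ∧ s ≤ p) ∨ (q ≤ r ∧ q ≤ s)) →
      ((r < s ∧ s < P 0) ∨ (P 0 < s ∧ s < r)) → Prefers P s r) ∧
  (P 0 ≤ p → ∀ l : Fin m, p ≤ l → l ≤ q → l ≠ p → Prefers P p l) ∧
  (q ≤ P 0 → ∀ l : Fin m, p ≤ l → l ≤ q → l ≠ q → Prefers P q l)

/-- The `(p,q)`-hybrid domain of all `(p,q)`-hybrid preferences. -/
def hybridDomain [NeZero m] (p q : Fin m) : Set (Pref m) := {P | IsHybridPref p q P}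

/-- `D` is a `(p,q)`-hybrid* domain. -/
def IsHybridStar [NeZero m] (D : Set (Pref m)) (p q : Fin m) : Prop :=
  D ⊆ hybridDomain p q ∧
  (∀ k : Fin m, k ≠ 0 → k ≠ lastAlt m →
      ∃ l, VertexPathBetween D Set.univ 0 (lastAlt m) l ∧ k ∈ l) ∧
  ((p : ℕ) + 1 < (q : ℕ) → ∀ a : Fin m, ¬ IsLeaf D (Set.Icc p q) a)

/-- A lottery over the alternatives. -/
def Lottery (m : ℕ) : Type :=
  {f : Fin m → ℝ // (∀ a, 0 ≤ f a) ∧ ∑ a, f a = 1}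

/-- The probability that a lottery assigns to a set of alternatives. -/
def Lottery.prob (lam : Lottery m) (B : Finset (Fin m)) : ℝ := ∑ a ∈ B, lam.1 a

/-- The support of a lottery. -/
def Lottery.supp (lam : Lottery m) : Finset (Fin m) :=
  Finset.univ.filter (fun a => 0 < lam.1 a)

/-- The degenerate lottery on `a`. -/
def degLottery (a : Fin m) : Lottery m :=
  ⟨fun b => if b = a then 1 else 0,
   fun b => by by_cases h : b = a <;> simp [h],
   by simp⟩

/-- A profile of preferences drawn from the domain `D`. -/
abbrev Profile (D : Set (Pref m)) (n : ℕ) := Fin n → D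

/-- The top-ranked alternative of a preference in the domain. -/
def topOf [NeZero m] {D : Set (Pref m)} (P : D) : Fin m := P.1 0

def Unanimous [NeZero m] {D : Set (Pref m)} (φ : Profile D n → Lottery m) : Prop :=
  ∀ (P : Profile D n) (a : Fin m), (∀ i, topOf (P i) = a) → φ P = degLottery a

/-- The total probability of the `k` top-ranked alternatives of `P` under `lam`. -/
def topSum (lam : Lottery m) (P : Pref m) (k : ℕ) : ℝ :=
  ∑ t ∈ Finset.univ.filter (fun t : Fin m => (t : ℕ) < k), lam.1 (P t)

/-- Strategy-proofness: truth-telling first-order stochastically dominates any unilateral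
misrepresentation. -/
def StrategyProof {D : Set (Pref m)} (φ : Profile D n → Lottery m) : Prop :=
  ∀ (i : Fin n) (P : Profile D n) (Pi' : D) (k : ℕ), k ≤ m →
    topSum (φ (Function.update P i Pi')) (P i).1 k ≤ topSum (φ P) (P i).1 k

def TopsOnly [NeZero m] {D : Set (Pref m)} (φ : Profile D n → Lottery m) : Prop :=
  ∀ P P' : Profile D n, (∀ i, topOf (P i) = topOf (P' i)) → φ P = φ P'

def Anonymous {D : Set (Pref m)} (φ : Profile D n → Lottery m) : Prop :=
  ∀ (P : Profile D n) (σ : Equiv.Perm (Fin n)), φ (P ∘ σ) = φ P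

/-- The interval `[a_k, a_m]`. -/
def upSet (k : Fin m) : Finset (Fin m) := Finset.univ.filter (fun a => k ≤ a)

/-- The interval `[a_1, a_k]`. -/
def downSet (k : Fin m) : Finset (Fin m) := Finset.univ.filter (fun a => a ≤ k)

/-- The interval `[a_p, a_q]`. -/
def midSet (p q : Fin m) : Finset (Fin m) := Finset.univ.filter (fun a => p ≤ a ∧ a ≤ q)

/-- `S(k,P)`: the voters whose preference top is not to the left of `a_k`. -/
def voterSet [NeZero m] {D : Set (Pref m)} (P : Profile D n) (k : Fin m) : Finset (Fin n) :=
  Finset.univ.filter (fun i => k ≤ topOf (P i))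

/-- `β_{S(k,P)}([a_k, a_m])`, with the convention that it is `0` for `k = m`. -/
def tailProb [NeZero m] {D : Set (Pref m)} (β : Finset (Fin n) → Lottery m)
    (P : Profile D n) (k : ℕ) : ℝ :=
  if h : k < m then (β (voterSet P ⟨k, h⟩)).prob (upSet ⟨k, h⟩) else 0

def BallotUnanimity [NeZero m] (β : Finset (Fin n) → Lottery m) : Prop :=
  β Finset.univ = degLottery (lastAlt m) ∧ β ∅ = degLottery 0

def BallotMonotone (β : Finset (Fin n) → Lottery m) : Prop :=
  ∀ S T : Finset (Fin n), S ⊂ T →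
    ∀ k : Fin m, (β S).prob (upSet k) ≤ (β T).prob (upSet k)

/-- `φ` is a probabilistic fixed ballot rule with probabilistic ballots `β`. -/
def IsPFBRWith [NeZero m] {D : Set (Pref m)} (φ : Profile D n → Lottery m)
    (β : Finset (Fin n) → Lottery m) : Prop :=
  BallotUnanimity β ∧ BallotMonotone β ∧
  ∀ (P : Profile D n) (k : Fin m),
    (φ P).1 k = tailProb β P (k : ℕ) - tailProb β P ((k : ℕ) + 1)

def IsPFBR [NeZero m] {D : Set (Pref m)} (φ : Profile D n → Lottery m) : Prop :=
  ∃ β, IsPFBRWith φ β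

/-- The constrained random-dictatorship condition w.r.t. `a_p` and `a_q`. -/
def ConstrainedRD (p q : Fin m) (β : Finset (Fin n) → Lottery m) : Prop :=
  ∃ ε : Fin n → ℝ, (∀ i, 0 ≤ ε i) ∧ ∑ i, ε i = 1 ∧
    ∀ S : Finset (Fin n),
      (β S).prob (upSet q) = ∑ i ∈ S, ε i ∧
      (β S).prob (downSet p) = ∑ i ∈ Sᶜ, ε i

/-- The constrained random-dictatorship condition w.r.t. `a_p` and `a_q` with every
conditional dictatorial coefficient equal to `1/n`. -/
def ConstrainedRDUniform (p q : Fin m) (β : Finset (Fin n) → Lottery m) : Prop :=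
  ∀ S : Finset (Fin n),
    (β S).prob (upSet q) = (S.card : ℝ) / (n : ℝ) ∧
    (β S).prob (downSet p) = ((Sᶜ : Finset (Fin n)).card : ℝ) / (n : ℝ)

/-- Anonymity at the level of probabilistic ballots. -/
def BallotAnonymous (β : Finset (Fin n) → Lottery m) : Prop :=
  ∀ S S' : Finset (Fin n), S.Nonempty → S'.Nonempty → S.card = S'.card → β S = β S'

/-- Per-capita monotonicity w.r.t. `a_p` and `a_q`. -/
def PerCapitaMonotone (p q : Fin m) (β : Finset (Fin n) → Lottery m) : Prop :=
  ∀ S S' : Finset (Fin n), S.Nonempty → S ⊂ S' → S' ⊂ Finset.univ →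
    (∀ t : Fin m, q ≤ t →
      (β S).prob (upSet t) / (S.card : ℝ) ≤ (β S').prob (upSet t) / (S'.card : ℝ)) ∧
    (∀ s : Fin m, s ≤ p →
      (β Sᶜ).prob (downSet s) / (S.card : ℝ) ≤ (β S'ᶜ).prob (downSet s) / (S'.card : ℝ))

/-- Decomposability: `φ` is a mixture of finitely many unanimous and strategy-proof
deterministic social choice functions. -/
def Decomposable [NeZero m] {D : Set (Pref m)} (φ : Profile D n → Lottery m) : Prop :=
  ∃ (r : ℕ) (f : Fin r → (Profile D n → Fin m)) (α : Fin r → ℝ),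
    (∀ k, 0 < α k) ∧ ∑ k, α k = 1 ∧
    (∀ k, Unanimous (fun P => degLottery (f k P)) ∧
          StrategyProof (fun P => degLottery (f k P))) ∧
    ∀ (P : Profile D n) (a : Fin m),
      (φ P).1 a = ∑ k, α k * (if f k P = a then 1 else 0)

/-- `b̂_S^R`: the `≺`-minimum of `supp(β_S) ∩ R` (with the convention `b̂_N^R = a_m`). -/
def bR [NeZero m] (β : Finset (Fin n) → Lottery m) (q : Fin m) (S : Finset (Fin n)) : Fin m :=
  if h : ((β S).supp ∩ upSet q).Nonempty then ((β S).supp ∩ upSet q).min' h else lastAlt m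

/-- `b̂_S^L`: the `≺`-maximum of `supp(β_S) ∩ L` (with the convention `b̂_∅^L = a_1`). -/
def bL [NeZero m] (β : Finset (Fin n) → Lottery m) (p : Fin m) (S : Finset (Fin n)) : Fin m :=
  if h : ((β S).supp ∩ downSet p).Nonempty then ((β S).supp ∩ downSet p).max' h else 0

/-- `α = min over nonempty S ⊂ N of min(β_S(b̂_S^R)/|S|, β_S(b̂_S^L)/(n-|S|))`. -/
def alphaVal [NeZero m] (β : Finset (Fin n) → Lottery m) (p q : Fin m) : ℝ :=
  sInf {x : ℝ | ∃ S : Finset (Fin n), S.Nonempty ∧ S ≠ Finset.univ ∧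
    x = min ((β S).1 (bR β q S) / (S.card : ℝ))
            ((β S).1 (bL β p S) / ((n : ℝ) - (S.card : ℝ)))}

/-- `γ_S = (|S|/n) e_{b̂_S^R} + ((n-|S|)/n) e_{b̂_S^L}`, pointwise. -/
def gammaFun [NeZero m] (β : Finset (Fin n) → Lottery m) (p q : Fin m)
    (S : Finset (Fin n)) (a : Fin m) : ℝ :=
  ((S.card : ℝ) / (n : ℝ)) * (if a = bR β q S then 1 else 0)
  + (((n : ℝ) - (S.card : ℝ)) / (n : ℝ)) * (if a = bL β p S then 1 else 0)

/-- The max-min formula `f(P) = max_{S ⊆ N} min({r_1(P_j) : j ∈ S} ∪ {b_S})`. -/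
def fbrOutcome [NeZero m] {D : Set (Pref m)} (b : Finset (Fin n) → Fin m)
    (P : Profile D n) : Fin m :=
  Finset.univ.sup' Finset.univ_nonempty
    (fun S : Finset (Fin n) =>
      (insert (b S) (S.image (fun j => topOf (P j)))).inf' (Finset.insert_nonempty _ _) id)

/-- `f` is a `(p,q)`-fixed ballot rule with deterministic ballots `b` and constrained
dictator `i`. -/
def IsFBRWith [NeZero m] {D : Set (Pref m)} (p q : Fin m) (f : Profile D n → Fin m)
    (b : Finset (Fin n) → Fin m) (i : Fin n) : Prop :=
  b Finset.univ = lastAlt m ∧ b ∅ = 0 ∧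
  (∀ S T : Finset (Fin n), S ⊂ T → b S ≤ b T) ∧
  (∀ S : Finset (Fin n), (i ∈ S → q ≤ b S) ∧ (i ∉ S → b S ≤ p)) ∧
  ∀ P : Profile D n, f P = fbrOutcome b P

end PFBRPaper

open PFBRPaper

/-!
No-restoration paths make a unanimous and strategy-proof rule depend on preference tops only. When
one voter's top then moves along a strongly connected pair, probability shifts only within that
pair. Hence the probability of an alternative `x` depends on each voter's top only up to
connectivity in the graph with `x` deleted.

Deleting `p` does not disconnect the middle part, so the probability of `p` is a function of the
coalition topping `p`. As `p` is not a leaf, it has a neighbour `w` with the same property; merging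
`w` into `p` shows that this function is additive, which yields weights `ε` at `p`. Likewise there
are weights at `q`, and they coincide: where one voter tops `p` and all others top `q`, total
probability at most one gives `ε ≤ δ`. At any other alternative `a`, moving each voter who does not
top `a` to whichever endpoint is reachable without crossing `a` bounds the probability of `a` by the
weight of its supporters, and total mass one turns all these bounds into equalities.
-/

namespace PFBRPaper

theorem pi_update_induction {ι α : Type*} [Finite ι] [DecidableEq ι] {r : α → α → Prop}
    {I : (ι → α) → Prop} (hI : ∀ t i b, r (t i) b → I t → I (Function.update t i b))
    {t t' : ι → α} (htt' : ∀ i, Relation.ReflTransGen r (t i) (t' i)) (ht : I t) : I t' := by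
  have := Fintype.ofFinite ι
  have update_of_reflTransGen (u : ι → α) (i : ι) {b : α}
      (hb : Relation.ReflTransGen r (u i) b) (hu : I u) : I (Function.update u i b) := by
    induction hb with
    | refl => rwa [Function.update_eq_self]
    | tail _ hbc ih => simpa using hI _ i _ (by simpa using hbc) ih
  suffices ∀ s : Finset ι, I (s.piecewise t' t) by simpa using this univ
  intro s
  induction s using Finset.induction_on with
  | empty => simpa
  | insert j s hj ih =>
    rw [Finset.piecewise_insert]
    exact update_of_reflTransGen _ j (by simpa [hj] using htt' j) ih

theorem sum_eq_sum_of_forall_notMem {V : Type*} [Fintype V] {f g : V → ℝ} {s : Finset V}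
    (hsum : ∑ x, f x = ∑ x, g x) (h : ∀ x ∉ s, f x = g x) :
    ∑ x ∈ s, f x = ∑ x ∈ s, g x := by
  classical
  have hcompl : ∑ x ∈ sᶜ, f x = ∑ x ∈ sᶜ, g x :=
    Finset.sum_congr rfl fun x hx ↦ h x (Finset.mem_compl.1 hx)
  linarith [Finset.sum_add_sum_compl s f, Finset.sum_add_sum_compl s g]

theorem eq_sum_singleton_of_disjoint_additive {ι : Type*} [DecidableEq ι] {g : Finset ι → ℝ}
    (h0 : g ∅ = 0) (hadd : ∀ A B, Disjoint A B → g A + g B = g (A ∪ B)) (S : Finset ι) :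
    g S = ∑ i ∈ S, g {i} := by
  induction S using Finset.induction_on with
  | empty => simpa
  | insert j S hj ih =>
    rw [Finset.sum_insert hj, ← ih, hadd _ _ (Finset.disjoint_singleton_left.2 hj),
      Finset.insert_eq]

section Graph

variable {V : Type*} {G : SimpleGraph V} {M : Set V} {k p q u v w x : V}

theorem reachable_deleteIncidenceSet_of_notMem_support (W : G.Walk u v) (hx : x ∉ W.support) :
    (G.deleteIncidenceSet x).Reachable u v := by
  refine ⟨W.transfer _ fun e he ↦ ?_⟩
  rw [SimpleGraph.edgeSet_deleteIncidenceSet]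
  refine ⟨W.edges_subset_edgeSet he, fun hinc ↦ hx ?_⟩
  exact W.mem_support_of_mem_edges he hinc.2

theorem not_reachable_deleteIncidenceSet (h : u ≠ x) :
    ¬ (G.deleteIncidenceSet x).Reachable u x := by
  rintro ⟨W⟩
  cases W.reverse with
  | nil => exact h rfl
  | cons hadj _ => exact (SimpleGraph.deleteIncidenceSet_adj.1 hadj).2.1 rfl

/-- The vertices lying on a path of `G` from `p` to `q`. For the strong-connectedness graph of a
`(p,q)`-hybrid* domain it contains the middle part `M`, and the argument runs on all of it. -/
def pathInterval (G : SimpleGraph V) (p q : V) : Set V :=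
  {k | ∃ W : G.Walk p q, W.IsPath ∧ k ∈ W.support}

theorem pathInterval_comm (G : SimpleGraph V) (p q : V) :
    pathInterval G p q = pathInterval G q p :=
  Set.Subset.antisymm
    (fun _ ⟨W, hW, hk⟩ ↦ ⟨W.reverse, hW.reverse, by simpa using hk⟩)
    (fun _ ⟨W, hW, hk⟩ ↦ ⟨W.reverse, hW.reverse, by simpa using hk⟩)

theorem left_mem_pathInterval (hk : k ∈ pathInterval G p q) : p ∈ pathInterval G p q :=
  let ⟨W, hW, _⟩ := hk
  ⟨W, hW, W.start_mem_support⟩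

theorem right_mem_pathInterval (hk : k ∈ pathInterval G p q) : q ∈ pathInterval G p q :=
  let ⟨W, hW, _⟩ := hk
  ⟨W, hW, W.end_mem_support⟩

theorem reachable_left_or_right_of_mem_pathInterval (hk : k ∈ pathInterval G p q) (hkx : k ≠ x) :
    (G.deleteIncidenceSet x).Reachable k p ∨ (G.deleteIncidenceSet x).Reachable k q := by
  obtain ⟨W, hW, hkW⟩ := hk
  obtain ⟨W₁, W₂, rfl⟩ := SimpleGraph.Walk.mem_support_iff_exists_append.1 hkW
  by_cases hx : x ∈ W₁.support
  · exact .inr <| reachable_deleteIncidenceSet_of_notMem_support W₂ fun hx₂ ↦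
      hW.ne_of_mem_support_of_append hkx.symm hx hx₂ rfl
  · exact .inl (reachable_deleteIncidenceSet_of_notMem_support W₁ hx).symm

/-- Deleting `x` does not disconnect two other vertices of `M`. The connecting walk may leave `M`,
which makes this weaker than `x` not being a cut vertex of the subgraph induced on `M`. -/
def IsNonSeparating (G : SimpleGraph V) (M : Set V) (x : V) : Prop :=
  ∀ y ∈ M, ∀ y' ∈ M, y ≠ x → y' ≠ x → (G.deleteIncidenceSet x).Reachable y y'

theorem isNonSeparating_left (G : SimpleGraph V) (p q : V) :
    IsNonSeparating G (pathInterval G p q) p := by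
  have reachable_right : ∀ y ∈ pathInterval G p q, y ≠ p →
      (G.deleteIncidenceSet p).Reachable y q := fun y hy hyp ↦
    (reachable_left_or_right_of_mem_pathInterval hy hyp).resolve_left
      (not_reachable_deleteIncidenceSet hyp)
  exact fun y hy y' hy' hyp hyp' ↦
    (reachable_right y hy hyp).trans (reachable_right y' hy' hyp').symm

theorem isNonSeparating_of_reachable (h : (G.deleteIncidenceSet x).Reachable p q) :
    IsNonSeparating G (pathInterval G p q) x := by
  have reachable_right : ∀ y ∈ pathInterval G p q, y ≠ x →
      (G.deleteIncidenceSet x).Reachable y q := fun y hy hyx ↦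
    (reachable_left_or_right_of_mem_pathInterval hy hyx).elim (·.trans h) id
  exact fun y hy y' hy' hyx hyx' ↦
    (reachable_right y hy hyx).trans (reachable_right y' hy' hyx').symm

theorem exists_adj_isNonSeparating (h : (G.neighborSet p ∩ pathInterval G p q).Nontrivial) :
    ∃ w ∈ pathInterval G p q, ∃ r ∈ pathInterval G p q,
      G.Adj p w ∧ r ≠ p ∧ r ≠ w ∧ IsNonSeparating G (pathInterval G p q) w := by
  obtain ⟨w₁, ⟨hadj₁, hw₁⟩, w₂, ⟨hadj₂, hw₂⟩, hne⟩ := h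
  have isNonSeparating {w r : V} (hpw : G.Adj p w) (hpr : G.Adj p r) (hrw : r ≠ w)
      (h : (G.deleteIncidenceSet w).Reachable r q) :
      IsNonSeparating G (pathInterval G p q) w := by
    have hpr' : (G.deleteIncidenceSet w).Adj p r :=
      SimpleGraph.deleteIncidenceSet_adj.2 ⟨hpr, hpw.ne, hrw⟩
    exact isNonSeparating_of_reachable (hpr'.reachable.trans h)
  obtain ⟨W, hW, hw₁W⟩ := hw₁
  obtain ⟨W₁, W₂, rfl⟩ := SimpleGraph.Walk.mem_support_iff_exists_append.1 hw₁W
  by_cases hw₂W : w₂ ∈ W₂.support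
  · obtain ⟨W₃, W₄, rfl⟩ := SimpleGraph.Walk.mem_support_iff_exists_append.1 hw₂W
    have hw₁W₄ : w₁ ∉ W₄.support := fun h ↦
      hW.of_append_right.ne_of_mem_support_of_append hne W₃.start_mem_support h rfl
    exact ⟨w₁, ⟨_, hW, hw₁W⟩, w₂, hw₂, hadj₁, hadj₂.ne', hne.symm,
      isNonSeparating hadj₁ hadj₂ hne.symm
        (reachable_deleteIncidenceSet_of_notMem_support W₄ hw₁W₄)⟩
  · exact ⟨w₂, hw₂, w₁, ⟨_, hW, hw₁W⟩, hadj₂, hadj₁.ne', hne,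
      isNonSeparating hadj₂ hadj₁ hne (reachable_deleteIncidenceSet_of_notMem_support W₂ hw₂W)⟩

end Graph

section LocalRule

variable {ι V : Type*} [DecidableEq ι] [Fintype V] [DecidableEq V]
  {G : SimpleGraph V} {f : (ι → V) → V → ℝ} {M : Set V} {p q r w x : V} {t t' : ι → V}

/-- A rule assigning to each profile `t` of top alternatives a lottery `f t`, unanimous and
satisfying the only consequence of strategy-proofness needed on a graph of alternatives: when one
voter moves along an edge, no alternative off that edge gains or loses probability. -/
structure IsLocalRule (G : SimpleGraph V) (f : (ι → V) → V → ℝ) : Prop where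
  mem_stdSimplex : ∀ t, f t ∈ stdSimplex ℝ V
  unanimous : ∀ a, f (fun _ ↦ a) = Pi.single a 1
  update : ∀ t i b x, G.Adj (t i) b → x ≠ t i → x ≠ b → f (Function.update t i b) x = f t x

/-- On profiles in `M`, the probability of `x` is the total weight of the voters topping `x`, as in
the random dictatorship with coefficients `ε`. -/
def IsRandomDictatorshipAt [Fintype ι] (f : (ι → V) → V → ℝ) (M : Set V) (ε : ι → ℝ) (x : V) :
    Prop :=
  ∀ t, (∀ i, t i ∈ M) → f t x = ∑ i with t i = x, ε i

/-- The two-valued profile in which the coalition `S` tops `x` and everyone else tops `r`. -/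
def coalitionProfile (x r : V) (S : Finset ι) : ι → V := S.piecewise (fun _ ↦ x) fun _ ↦ r

omit [Fintype V] [DecidableEq V] in
theorem coalitionProfile_mem (hx : x ∈ M) (hr : r ∈ M) {S : Finset ι} (i : ι) :
    coalitionProfile x r S i ∈ M := by
  by_cases hi : i ∈ S <;> simpa [coalitionProfile, hi]

omit [Fintype V] [DecidableEq V] in
theorem coalitionProfile_apply_eq_left_iff (hrx : r ≠ x) {S : Finset ι} {i : ι} :
    coalitionProfile x r S i = x ↔ i ∈ S := by
  by_cases hi : i ∈ S <;> simp [coalitionProfile, hi, hrx]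

namespace IsLocalRule

theorem sum_le_one (hf : IsLocalRule G f) (t : ι → V) (s : Finset V) : ∑ x ∈ s, f t x ≤ 1 :=
  (Finset.sum_le_univ_sum_of_nonneg (hf.mem_stdSimplex t).1).trans_eq (hf.mem_stdSimplex t).2

section Finite

variable [Finite ι]

theorem apply_eq_of_reachable (hf : IsLocalRule G f)
    (h : ∀ i, (G.deleteIncidenceSet x).Reachable (t i) (t' i)) : f t' x = f t x := by
  refine pi_update_induction (r := (G.deleteIncidenceSet x).Adj) (I := fun u ↦ f u x = f t x)
    (fun u i b hadj hu ↦ ?_) (fun i ↦ SimpleGraph.reachable_iff_reflTransGen _ _ |>.1 (h i)) rfl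
  obtain ⟨hadj, hne, hne'⟩ := SimpleGraph.deleteIncidenceSet_adj.1 hadj
  exact (hf.update u i b x hadj hne.symm hne'.symm).trans hu

theorem apply_eq_of_isNonSeparating (hf : IsLocalRule G f) (hx : IsNonSeparating G M x)
    (ht : ∀ i, t i ∈ M) (ht' : ∀ i, t' i ∈ M) (h : ∀ i, t i = x ↔ t' i = x) :
    f t x = f t' x := by
  refine (hf.apply_eq_of_reachable fun i ↦ ?_).symm
  by_cases hi : t i = x
  · rw [hi, (h i).1 hi]
  · exact hx _ (ht i) _ (ht' i) hi (mt (h i).2 hi)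

theorem apply_eq_zero (hf : IsLocalRule G f) (hx : IsNonSeparating G M x)
    (ht : ∀ i, t i ∈ M) (h : ∀ i, t i ≠ x) (hp : p ∈ M) (hpx : p ≠ x) : f t x = 0 := by
  rw [hf.apply_eq_of_isNonSeparating hx ht (t' := fun _ ↦ p) (fun _ ↦ hp) (by simp [h, hpx]),
    hf.unanimous, Pi.single_eq_of_ne hpx.symm]

theorem apply_add_apply_eq_merge (hf : IsLocalRule G f) (hpw : G.Adj p w)
    (hw : IsNonSeparating G M w) (hp : p ∈ M) (ht : ∀ i, t i ∈ M) :
    f t p + f t w = f (fun i ↦ if t i = w then p else t i) p := by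
  set t' : ι → V := fun i ↦ if t i = w then p else t i with ht'
  have hzero : f t' w = 0 := by
    refine hf.apply_eq_zero hw (fun i ↦ ?_) (fun i ↦ ?_) hp hpw.ne <;>
      simp only [ht'] <;> split_ifs with hi
    exacts [hp, ht i, hpw.ne, hi]
  have hpair : ∑ x ∈ {p, w}, f t' x = ∑ x ∈ {p, w}, f t x := by
    refine sum_eq_sum_of_forall_notMem
      ((hf.mem_stdSimplex t').2.trans (hf.mem_stdSimplex t).2.symm) fun x hx ↦ ?_
    simp only [Finset.mem_insert, Finset.mem_singleton, not_or] at hx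
    refine hf.apply_eq_of_reachable fun i ↦ ?_
    simp only [ht']
    split_ifs with hi
    · have hwp : (G.deleteIncidenceSet x).Adj w p :=
        SimpleGraph.deleteIncidenceSet_adj.2 ⟨hpw.symm, Ne.symm hx.2, Ne.symm hx.1⟩
      exact hi ▸ hwp.reachable
    · rfl
  simpa [Finset.sum_pair hpw.ne, hzero] using hpair.symm

theorem apply_coalitionProfile_add (hf : IsLocalRule G f) (hpM : p ∈ M) (hwM : w ∈ M)
    (hrM : r ∈ M) (hpw : G.Adj p w) (hrp : r ≠ p) (hrw : r ≠ w) (hp : IsNonSeparating G M p)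
    (hw : IsNonSeparating G M w) {A B : Finset ι} (hAB : Disjoint A B) :
    f (coalitionProfile p r A) p + f (coalitionProfile w r B) w =
      f (coalitionProfile p r (A ∪ B)) p := by
  let t : ι → V := A.piecewise (fun _ ↦ p) (coalitionProfile w r B)
  have ht (i : ι) : t i ∈ M := by
    by_cases hi : i ∈ A <;> simp [t, hi, hpM, coalitionProfile_mem hwM hrM]
  have htp (i : ι) : coalitionProfile p r A i = p ↔ t i = p := by
    by_cases hA : i ∈ A <;> by_cases hB : i ∈ B <;>
      simp [coalitionProfile, t, hA, hB, hpw.ne', hrp]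
  have htw (i : ι) : coalitionProfile w r B i = w ↔ t i = w := by
    by_cases hA : i ∈ A
    · simp [coalitionProfile, t, hA, Finset.disjoint_left.1 hAB hA, hpw.ne, hrw]
    · simp [t, hA]
  have htpw : (fun i ↦ if t i = w then p else t i) = coalitionProfile p r (A ∪ B) := by
    ext i
    by_cases hA : i ∈ A <;> by_cases hB : i ∈ B <;>
      simp [coalitionProfile, t, hA, hB, hpw.ne, hrw]
  rw [hf.apply_eq_of_isNonSeparating hp (coalitionProfile_mem hpM hrM) ht htp,
    hf.apply_eq_of_isNonSeparating hw (coalitionProfile_mem hwM hrM) ht htw,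
    hf.apply_add_apply_eq_merge hpw hw hpM ht, htpw]

end Finite

section Fintype

variable [Fintype ι] {ε δ : ι → ℝ}

theorem exists_weights_of_isNonSeparating (hf : IsLocalRule G f) (hpM : p ∈ M) (hwM : w ∈ M)
    (hrM : r ∈ M) (hpw : G.Adj p w) (hrp : r ≠ p) (hrw : r ≠ w)
    (hp : IsNonSeparating G M p) (hw : IsNonSeparating G M w) :
    ∃ ε ∈ stdSimplex ℝ ι, IsRandomDictatorshipAt f M ε p := by
  let g (S : Finset ι) : ℝ := f (coalitionProfile p r S) p
  have hempty : g ∅ = 0 := by simp [g, coalitionProfile, hf.unanimous, hrp.symm]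
  have huniv : g univ = 1 := by simp [g, coalitionProfile, hf.unanimous]
  have hmerge {A B : Finset ι} (hAB : Disjoint A B) :
      g A + f (coalitionProfile w r B) w = g (A ∪ B) :=
    hf.apply_coalitionProfile_add hpM hwM hrM hpw hrp hrw hp hw hAB
  have hgw (S : Finset ι) : g S = f (coalitionProfile w r S) w := by
    simpa [hempty] using (hmerge (Finset.disjoint_empty_left S)).symm
  have hsum : ∀ S, g S = ∑ i ∈ S, g {i} :=
    eq_sum_singleton_of_disjoint_additive hempty fun A B hAB ↦ by rw [hgw B, hmerge hAB]
  refine ⟨fun i ↦ g {i}, ⟨fun i ↦ (hf.mem_stdSimplex _).1 p, ?_⟩, fun t ht ↦ ?_⟩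
  · rw [← hsum, huniv]
  · rw [← hsum]
    exact hf.apply_eq_of_isNonSeparating hp ht (coalitionProfile_mem hpM hrM)
      (by simp [coalitionProfile_apply_eq_left_iff hrp])

theorem exists_weights_left (hf : IsLocalRule G f)
    (h : (G.neighborSet p ∩ pathInterval G p q).Nontrivial) :
    ∃ ε ∈ stdSimplex ℝ ι, IsRandomDictatorshipAt f (pathInterval G p q) ε p := by
  obtain ⟨w, hw, r, hr, hpw, hrp, hrw, hnonsep⟩ := exists_adj_isNonSeparating h
  exact hf.exists_weights_of_isNonSeparating (left_mem_pathInterval hw) hw hr hpw hrp hrw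
    (isNonSeparating_left G p q) hnonsep

theorem weights_le_weights (hf : IsLocalRule G f) (hpq : p ≠ q) (hp : p ∈ M) (hq : q ∈ M)
    (hε : IsRandomDictatorshipAt f M ε p) (hδ : IsRandomDictatorshipAt f M δ q)
    (hδ1 : ∑ i, δ i = 1) : ε ≤ δ := by
  intro i
  let t : ι → V := Function.update (fun _ ↦ q) i p
  have ht (j : ι) : t j ∈ M := by by_cases hj : j = i <;> simp [t, *]
  have hfp : f t p = ε i := by
    rw [hε t ht]
    simp [t, Function.update_apply, Finset.filter_eq', hpq.symm]
  have hfq : f t q + δ i = 1 := by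
    rw [hδ t ht, ← hδ1, ← Finset.sum_erase_add univ δ (Finset.mem_univ i)]
    congr 2
    ext j
    by_cases hj : j = i <;> simp [t, Function.update_apply, hj, hpq]
  have hle := hf.sum_le_one t {p, q}
  rw [Finset.sum_pair hpq, hfp] at hle
  linarith

theorem apply_le_sum_weights (hf : IsLocalRule G f) (hpq : p ≠ q) (hε1 : ∑ i, ε i = 1)
    (hp : IsRandomDictatorshipAt f (pathInterval G p q) ε p)
    (hq : IsRandomDictatorshipAt f (pathInterval G p q) ε q)
    (ht : ∀ i, t i ∈ pathInterval G p q) (a : V) : f t a ≤ ∑ i with t i = a, ε i := by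
  rcases eq_or_ne a p with rfl | hap
  · exact (hp t ht).le
  rcases eq_or_ne a q with rfl | haq
  · exact (hq t ht).le
  have exists_endpoint (i : ι) : ∃ b ∈ pathInterval G p q,
      (G.deleteIncidenceSet a).Reachable (t i) b ∧ (t i = a ↔ b = a) ∧ (b = a ∨ b = p ∨ b = q) := by
    by_cases hi : t i = a
    · exact ⟨a, hi ▸ ht i, hi ▸ .rfl, by simp [hi], .inl rfl⟩
    · rcases reachable_left_or_right_of_mem_pathInterval (ht i) hi with h | h
      · exact ⟨p, left_mem_pathInterval (ht i), h, by simp [hi, hap.symm], by simp⟩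
      · exact ⟨q, right_mem_pathInterval (ht i), h, by simp [hi, haq.symm], by simp⟩
  choose t' ht' hreach hiff hmem using exists_endpoint
  have hle := hf.sum_le_one t' {a, p, q}
  rw [Finset.sum_insert (by simp [hap, haq]), Finset.sum_pair hpq, hp t' ht', hq t' ht',
    hf.apply_eq_of_reachable hreach] at hle
  have hsplit : ∑ i with t i = a, ε i + (∑ i with t' i = p, ε i + ∑ i with t' i = q, ε i) = 1 := by
    rw [← hε1]
    simp only [hiff, Finset.sum_filter, ← Finset.sum_add_distrib]
    refine Finset.sum_congr rfl fun i _ ↦ ?_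
    rcases hmem i with h | h | h <;> simp [h, hap, haq, hap.symm, haq.symm, hpq, hpq.symm]
  linarith

theorem exists_randomDictatorship (hf : IsLocalRule G f)
    (hp : (G.neighborSet p ∩ pathInterval G p q).Nontrivial)
    (hq : (G.neighborSet q ∩ pathInterval G p q).Nontrivial) :
    ∃ ε ∈ stdSimplex ℝ ι, ∀ a, IsRandomDictatorshipAt f (pathInterval G p q) ε a := by
  obtain ⟨k, -, hk⟩ := hp.nonempty
  have hpM := left_mem_pathInterval hk
  have hqM := right_mem_pathInterval hk
  have hpq : p ≠ q := by
    rintro rfl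
    obtain ⟨k, hpk, W, hW, hkW⟩ := hp.nonempty
    obtain rfl := (SimpleGraph.Walk.isPath_iff_nil.1 hW).eq_nil
    exact hpk.ne' (by simpa using hkW)
  obtain ⟨ε, hε, hεp⟩ := hf.exists_weights_left hp
  obtain ⟨δ, hδ, hδq⟩ := hf.exists_weights_left (p := q) (q := p) (pathInterval_comm G p q ▸ hq)
  rw [pathInterval_comm] at hδq
  obtain rfl : ε = δ := le_antisymm (hf.weights_le_weights hpq hpM hqM hεp hδq hδ.2)
    (hf.weights_le_weights hpq.symm hqM hpM hδq hεp hε.2)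
  refine ⟨ε, hε, fun a t ht ↦ ?_⟩
  have htotal : ∑ a, f t a = ∑ a, ∑ i with t i = a, ε i := by
    rw [(hf.mem_stdSimplex t).2, Finset.sum_fiberwise, hε.2]
  exact (Finset.sum_eq_sum_iff_of_le fun a _ ↦
    hf.apply_le_sum_weights hpq hε.2 hεp hδq ht a).1 htotal a (Finset.mem_univ a)

end Fintype

end IsLocalRule

end LocalRule

section TopsOnly

variable {m n : ℕ} {D : Set (Pref m)} {φ : Profile D n → Lottery m} {P P' : Pref m} {x y z : Fin m}

theorem Prefers.ne (h : Prefers P x y) : x ≠ y := by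
  rintro rfl
  exact lt_irrefl _ h

theorem prefers_of_not_prefers (hxy : x ≠ y) (h : ¬ Prefers P x y) : Prefers P y x :=
  (not_lt.1 h).lt_of_ne (P.symm.injective.ne hxy.symm)

theorem Lottery.ext_of_forall_ne {lam mu : Lottery m} (a : Fin m)
    (h : ∀ x ≠ a, lam.1 x = mu.1 x) : lam = mu := by
  have ha : ∑ x ∈ {a}, lam.1 x = ∑ x ∈ {a}, mu.1 x :=
    sum_eq_sum_of_forall_notMem (lam.2.2.trans mu.2.2.symm) (by simpa using h)
  refine Subtype.ext (funext fun x ↦ ?_)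
  rcases eq_or_ne x a with rfl | hx
  exacts [by simpa using ha, h x hx]

theorem topSum_succ (lam : Lottery m) (P : Pref m) (l : Fin m) :
    topSum lam P (l + 1) = topSum lam P l + lam.1 (P l) := by
  have hfilter : univ.filter (fun t : Fin m ↦ (t : ℕ) < l + 1) =
      insert l (univ.filter fun t : Fin m ↦ (t : ℕ) < l) := by
    ext t
    simp only [Finset.mem_filter_univ, Finset.mem_insert, Fin.ext_iff]
    omega
  rw [topSum, hfilter, Finset.sum_insert (by simp), add_comm, topSum]

theorem topSum_swap_trans (lam : Lottery m) (P : Pref m) {s t : Fin m} {k : ℕ}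
    (h : (s : ℕ) < k ↔ (t : ℕ) < k) :
    topSum lam ((Equiv.swap s t).trans P) k = topSum lam P k := by
  refine Finset.sum_equiv (Equiv.swap s t) (fun u ↦ ?_) fun u _ ↦ rfl
  simp only [Finset.mem_filter_univ, Equiv.swap_apply_def]
  split_ifs with hs ht
  exacts [hs ▸ h, ht ▸ h.symm, .rfl]

namespace Adjacent

theorem exists_eq_swap_trans (h : Adjacent P P') :
    ∃ s t : Fin m, (t : ℕ) = s + 1 ∧ P' = (Equiv.swap s t).trans P := by
  obtain ⟨-, k, hk, hkk', hk'k, hrest⟩ := h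
  refine ⟨⟨k, by omega⟩, ⟨k + 1, hk⟩, rfl, Equiv.ext fun l ↦ ?_⟩
  rw [Equiv.trans_apply, Equiv.swap_apply_def]
  split_ifs with hl hl'
  · rw [hl, hk'k]
  · rw [hl', hkk']
  · exact (hrest l (by simpa [Fin.ext_iff] using hl) (by simpa [Fin.ext_iff] using hl')).symm

theorem exists_swapped (h : Adjacent P P') :
    ∃ x y, Prefers P x y ∧ Prefers P' y x ∧
      ∀ z, z ≠ x → z ≠ y → P.symm z = P'.symm z := by
  obtain ⟨s, t, hst, rfl⟩ := h.exists_eq_swap_trans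
  refine ⟨P s, P t, ?_, ?_, fun z hzs hzt ↦ ?_⟩
  · simp [Prefers, Fin.lt_def, hst]
  · simp [Prefers, Fin.lt_def, hst]
  · rw [Equiv.symm_trans_apply, Equiv.symm_swap, Equiv.swap_apply_of_ne_of_ne]
    · rwa [Ne, Equiv.symm_apply_eq]
    · rwa [Ne, Equiv.symm_apply_eq]

theorem symm_apply_eq_or_of_prefers (h : Adjacent P P') (hP : Prefers P x y)
    (hP' : Prefers P' x y) : P.symm x = P'.symm x ∨ P.symm y = P'.symm y := by
  obtain ⟨x', y', hx'y', hy'x', hrest⟩ := h.exists_swapped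
  simp only [Prefers] at *
  grind

theorem symm_apply_eq_of_top_ne [NeZero m] (h : Adjacent P P') (htop : P 0 ≠ P' 0)
    (hx : x ≠ P 0) (hx' : x ≠ P' 0) : P.symm x = P'.symm x := by
  obtain ⟨y, z, -, -, hrest⟩ := h.exists_swapped
  have hP : P 0 = y ∨ P 0 = z := by
    by_contra! hne
    exact htop (by rw [← Equiv.symm_apply_eq, ← hrest _ hne.1 hne.2, Equiv.symm_apply_apply])
  have hP' : P' 0 = y ∨ P' 0 = z := by
    by_contra! hne
    exact htop.symm (by rw [← Equiv.symm_apply_eq, hrest _ hne.1 hne.2, Equiv.symm_apply_apply])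
  exact hrest x (by grind) (by grind)

end Adjacent

theorem StrategyProof.topSum_update_le (hsp : StrategyProof φ) (R : Profile D n) (i : Fin n)
    (P P' : D) {k : ℕ} (hk : k ≤ m) :
    topSum (φ (Function.update R i P')) P.1 k ≤ topSum (φ (Function.update R i P)) P.1 k := by
  simpa using hsp i (Function.update R i P) P' k hk

theorem StrategyProof.apply_update_eq_of_adjacent (hsp : StrategyProof φ) (R : Profile D n)
    (i : Fin n) {P P' : D} (h : Adjacent P.1 P'.1) (hz : P.1.symm z = P'.1.symm z) :
    (φ (Function.update R i P)).1 z = (φ (Function.update R i P')).1 z := by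
  obtain ⟨s, t, hst, hswap⟩ := h.exists_eq_swap_trans
  have topSum_eq {k : ℕ} (hk : k ≤ m) (hkt : k ≠ t) :
      topSum (φ (Function.update R i P)) P.1 k = topSum (φ (Function.update R i P')) P.1 k := by
    refine le_antisymm ?_ (hsp.topSum_update_le R i P P' hk)
    have hle := hsp.topSum_update_le R i P' P hk
    rwa [hswap, topSum_swap_trans _ _ (by omega), topSum_swap_trans _ _ (by omega)] at hle
  set l := P.1.symm z
  have hlz : P.1 l = z := P.1.apply_symm_apply z
  have hlswap : Equiv.swap s t l = l := by
    rw [← P.1.apply_eq_iff_eq, ← Equiv.trans_apply, ← hswap, hlz, hz, Equiv.apply_symm_apply]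
  have hne : s ≠ t := fun h ↦ by simp [h] at hst
  have hlt : (l : ℕ) ≠ t := fun h ↦
    Equiv.swap_apply_ne_self_iff.2 ⟨hne, .inr (Fin.ext h)⟩ hlswap
  have hls : (l : ℕ) ≠ s := fun h ↦
    Equiv.swap_apply_ne_self_iff.2 ⟨hne, .inl (Fin.ext h)⟩ hlswap
  have hsucc := topSum_eq (k := l + 1) l.isLt (by omega)
  rw [topSum_succ, topSum_succ, topSum_eq l.isLt.le hlt, hlz] at hsucc
  exact add_left_cancel hsucc

theorem StrategyProof.update_update_eq (hsp : StrategyProof φ) {T : Profile D n} {i j : Fin n}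
    {P P' Q : D} (h : Adjacent P.1 P'.1)
    (hrest : ∀ z, z ≠ x → z ≠ y → P.1.symm z = P'.1.symm z) (hadj : Adjacent (T j).1 Q.1)
    (hx : (T j).1.symm x = Q.1.symm x)
    (hT : φ (Function.update T i P) = φ (Function.update T i P')) :
    φ (Function.update (Function.update T j Q) i P) =
      φ (Function.update (Function.update T j Q) i P') := by
  rcases eq_or_ne j i with rfl | hji
  · simpa only [Function.update_idem] using hT
  have apply_eq (S : D) :
      (φ (Function.update (Function.update T j Q) i S)).1 x = (φ (Function.update T i S)).1 x := by
    have hself : Function.update (Function.update T i S) j (T j) = Function.update T i S := by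
      simp [hji]
    rw [Function.update_comm hji, ← hsp.apply_update_eq_of_adjacent _ j hadj hx, hself]
  refine Lottery.ext_of_forall_ne y fun z hzy ↦ ?_
  rcases eq_or_ne z x with rfl | hzx
  · rw [apply_eq, apply_eq, hT]
  · exact hsp.apply_update_eq_of_adjacent _ i h (hrest z hzx hzy)

/-- Adjacency within the half-space of the preferences of `D` that rank `x` above `y`. -/
def AdjacentPreferring (D : Set (Pref m)) (x y : Fin m) (Q Q' : D) : Prop :=
  Adjacent Q.1 Q'.1 ∧ Prefers Q.1 x y ∧ Prefers Q'.1 x y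

theorem NoRestorationDomain.reflTransGen_adjacentPreferring (hD : NoRestorationDomain D)
    {P P' : D} (hP : Prefers P.1 x y) (hP' : Prefers P'.1 x y) :
    Relation.ReflTransGen (AdjacentPreferring D x y) P P' := by
  rcases eq_or_ne P P' with rfl | hne
  · exact .refl
  obtain ⟨π, v, ⟨hv, hmem, -, hstart, hend, hadj⟩, hrest⟩ :=
    hD P.1 P.2 P'.1 P'.2 (Subtype.coe_ne_coe.2 hne) x y
  have prefers_along (i : ℕ) (hi : i < v) : Prefers (π i) x y := by
    by_contra hnot
    have hyx : Prefers (π i) y x := prefers_of_not_prefers hP.ne hnot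
    have hi0 : 0 < i := Nat.pos_of_ne_zero fun h ↦ hnot (by rwa [h, hstart])
    have hiv : i < v - 1 := by
      refine lt_of_le_of_ne (by omega) fun h ↦ hnot (by rwa [h, hend])
    exact (hrest 0 i (v - 1) hi0 hiv (by omega)).1 ⟨by rwa [hstart], hyx, by rwa [hend]⟩
  have reach (i : ℕ) (hi : i < v) :
      Relation.ReflTransGen (AdjacentPreferring D x y) P ⟨π i, hmem i hi⟩ := by
    induction i with
    | zero => simp only [hstart]; exact .refl
    | succ i ih =>
      exact (ih (by omega)).tail ⟨hadj i hi, prefers_along i (by omega), prefers_along _ hi⟩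
  simpa only [hend] using reach (v - 1) (by omega)

variable [NeZero m]

theorem StrategyProof.update_eq_of_adjacent_of_top_eq (hsp : StrategyProof φ) (hu : Unanimous φ)
    (hD : NoRestorationDomain D) (R : Profile D n) (i : Fin n) {P P' : D}
    (h : Adjacent P.1 P'.1) (htop : P.1 0 = P'.1 0) :
    φ (Function.update R i P) = φ (Function.update R i P') := by
  classical
  obtain ⟨x, y, hxy, hyx, hrest⟩ := h.exists_swapped
  -- Start from a unanimous profile, where `P` and `P'` give the same lottery, and move every other
  -- voter to `R` along a path on which `x` and `y` never switch: each step fixes the rank of `x` or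
  -- of `y`, so the equality persists.
  let R₀ : Profile D n := fun j ↦ if Prefers (R j).1 x y then P else P'
  have hR₀ (Q : D) (hQ : Q.1 0 = P'.1 0) :
      φ (Function.update R₀ i Q) = degLottery (P'.1 0) := by
    refine hu _ _ fun j ↦ ?_
    rcases eq_or_ne j i with rfl | hj
    · simp [topOf, hQ]
    · by_cases hxyj : Prefers (R j).1 x y <;> simp [topOf, R₀, hj, hxyj, htop]
  refine pi_update_induction (t := R₀)
    (r := fun Q Q' ↦ AdjacentPreferring D x y Q Q' ∨ AdjacentPreferring D y x Q Q')
    (I := fun T ↦ φ (Function.update T i P) = φ (Function.update T i P'))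
    (fun T j Q hQ hT ↦ ?_) (fun j ↦ ?_) ((hR₀ P htop).trans (hR₀ P' rfl).symm)
  · have hadj : Adjacent (T j).1 Q.1 := hQ.elim And.left And.left
    have hor : (T j).1.symm x = Q.1.symm x ∨ (T j).1.symm y = Q.1.symm y :=
      hQ.elim (fun h ↦ hadj.symm_apply_eq_or_of_prefers h.2.1 h.2.2)
        fun h ↦ (hadj.symm_apply_eq_or_of_prefers h.2.1 h.2.2).symm
    exact hor.elim (hsp.update_update_eq h hrest hadj · hT)
      (hsp.update_update_eq h (fun z hzy hzx ↦ hrest z hzx hzy) hadj · hT)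
  · by_cases hxyj : Prefers (R j).1 x y
    · simp only [R₀, hxyj, if_true]
      exact Relation.ReflTransGen.mono (fun _ _ ↦ Or.inl) _ _
        (hD.reflTransGen_adjacentPreferring hxy hxyj)
    · simp only [R₀, hxyj, if_false]
      exact Relation.ReflTransGen.mono (fun _ _ ↦ Or.inr) _ _
        (hD.reflTransGen_adjacentPreferring hyx (prefers_of_not_prefers hxy.ne hxyj))

theorem prefers_top_iff : Prefers P (P 0) x ↔ x ≠ P 0 := by
  rw [Prefers, Equiv.symm_apply_apply, Fin.pos_iff_ne_zero, Ne, Equiv.symm_apply_eq]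

theorem Prefers.ne_top (h : Prefers P x y) : y ≠ P 0 := by
  rintro rfl
  simp [Prefers] at h

theorem StrategyProof.update_eq_of_top_eq (hsp : StrategyProof φ) (hu : Unanimous φ)
    (hD : NoRestorationDomain D) (R : Profile D n) (i : Fin n) {P P' : D}
    (htop : P.1 0 = P'.1 0) : φ (Function.update R i P) = φ (Function.update R i P') := by
  refine Lottery.ext_of_forall_ne (P.1 0) fun x hx ↦ ?_
  have hpath := hD.reflTransGen_adjacentPreferring (prefers_top_iff.2 hx)
    (htop ▸ prefers_top_iff.2 (htop ▸ hx))
  clear htop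
  generalize P.1 0 = a at hpath
  induction hpath with
  | refl => rfl
  | @tail Q Q' _ h ih =>
    obtain ⟨hadj, hQ, hQ'⟩ := h
    refine ih.trans ?_
    by_cases hQQ' : Q.1 0 = Q'.1 0
    · rw [hsp.update_eq_of_adjacent_of_top_eq hu hD R i hadj hQQ']
    · exact hsp.apply_update_eq_of_adjacent R i hadj
        (hadj.symm_apply_eq_of_top_ne hQQ' hQ.ne_top hQ'.ne_top)

theorem StrategyProof.topsOnly (hsp : StrategyProof φ) (hu : Unanimous φ)
    (hD : NoRestorationDomain D) : TopsOnly φ := fun P P' htop ↦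
  pi_update_induction (r := fun Q Q' ↦ topOf Q = topOf Q') (I := fun T ↦ φ P = φ T)
    (fun T i Q hQ hT ↦ hT.trans <| by simpa using hsp.update_eq_of_top_eq hu hD T i hQ)
    (fun i ↦ .single (htop i)) rfl

end TopsOnly

section Gate

variable {V : Type*} {G : SimpleGraph V} {S T : Set V} {k p q s e : V}

/-- Every edge of `G` leaving `S` ends at `p`, so that walks leave `S` only through `p`. -/
def IsGate (G : SimpleGraph V) (S : Set V) (p : V) : Prop :=
  ∀ a b, G.Adj a b → a ∈ S → b ∉ S → b = p

theorem IsGate.mem_support (hS : IsGate G S p) (W : G.Walk s e) (hs : s ∈ insert p S)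
    (he : e ∉ S) : p ∈ W.support := by
  rcases hs with rfl | hs
  · exact W.start_mem_support
  · obtain ⟨d, hdW, hd, hd'⟩ := W.exists_boundary_dart S hs he
    exact hS _ _ d.adj hd hd' ▸ W.dart_snd_mem_support_of_mem_darts hdW

theorem IsGate.mem_pathInterval (hS : IsGate G S p) (hT : IsGate G T q)
    (hs : s ∈ insert p S) (he : e ∈ insert q T) (hk : k ∈ pathInterval G s e)
    (hkS : k ∉ S) (hkT : k ∉ T) : k ∈ pathInterval G p q := by
  obtain ⟨W, hW, hkW⟩ := hk
  obtain ⟨U, U', rfl⟩ := SimpleGraph.Walk.mem_support_iff_exists_append.1 hkW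
  have hp : p ∈ U.support := hS.mem_support U hs hkS
  have hq : q ∈ U'.support := by simpa using hT.mem_support U'.reverse he hkT
  obtain ⟨U₁, U₂, rfl⟩ := SimpleGraph.Walk.mem_support_iff_exists_append.1 hp
  obtain ⟨U₃, U₄, rfl⟩ := SimpleGraph.Walk.mem_support_iff_exists_append.1 hq
  rw [← SimpleGraph.Walk.append_assoc, SimpleGraph.Walk.append_assoc U₂] at hW
  exact ⟨U₂.append U₃, hW.of_append_right.of_append_left, by simp⟩

theorem IsGate.exists_adj_notMem (hS : IsGate G S p) (hT : IsGate G T q) (hpq : p ≠ q)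
    (hqS : q ∉ S) (hpT : p ∉ T) (hk : k ∈ pathInterval G p q) :
    ∃ b, G.Adj p b ∧ b ∉ S ∧ b ∉ T := by
  obtain ⟨W, hW, -⟩ := hk
  cases W with
  | nil => exact absurd rfl hpq
  | @cons _ b _ hpb W' =>
    have hpW' : p ∉ W'.support := ((SimpleGraph.Walk.cons_isPath_iff _ _).1 hW).2
    exact ⟨b, hpb, fun hb ↦ hpW' (hS.mem_support W' (.inr hb) hqS),
      fun hb ↦ hpq (hT b p hpb.symm hb hpT)⟩

theorem exists_adj_of_mem_pathInterval (hpq : p ≠ q) (hk : k ∈ pathInterval G p q) :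
    ∃ b, G.Adj k b := by
  obtain ⟨W, -, hkW⟩ := hk
  obtain ⟨W₁, W₂, -⟩ := SimpleGraph.Walk.mem_support_iff_exists_append.1 hkW
  rcases eq_or_ne k q with rfl | hkq
  · exact ⟨_, W₁.reverse.adj_snd (SimpleGraph.Walk.not_nil_of_ne hpq.symm)⟩
  · exact ⟨_, W₂.adj_snd (SimpleGraph.Walk.not_nil_of_ne hkq)⟩

end Gate

section StrongConnectedness

variable {m n : ℕ} [NeZero m] {D : Set (Pref m)} {φ : Profile D n → Lottery m}
  {P : Pref m} {p q a b k x : Fin m} {l : List (Fin m)}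

/-- The graph `G_≈^A(D)` of strongly connected pairs of alternatives. -/
def strongConnGraph (D : Set (Pref m)) : SimpleGraph (Fin m) where
  Adj := StronglyConnected D
  symm := ⟨fun _ _ ⟨hne, P, hP, P', hP', hP0, hP1, hP'0, hP'1, hrest⟩ ↦
    ⟨hne.symm, P', hP', P, hP, hP'0, hP'1, hP0, hP1, fun k hk ↦ (hrest k hk).symm⟩⟩
  loopless := ⟨fun _ h ↦ h.1 rfl⟩

theorem StronglyConnected.exists_adjacent (h : StronglyConnected D a b) :
    ∃ P P' : D, topOf P = a ∧ topOf P' = b ∧ Adjacent P.1 P'.1 := by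
  obtain ⟨hne, P, hP, P', hP', rfl, hP1, rfl, hP'1, hrest⟩ := h
  refine ⟨⟨P, hP⟩, ⟨P', hP'⟩, rfl, rfl, fun h ↦ hne (congrArg (· 0) h), ?_⟩
  obtain _ | _ | m := m
  · exact (P 0).elim0
  · exact absurd (Subsingleton.elim (α := Fin 1) _ _) hne
  · exact ⟨0, by omega, hP'1.symm, hP1, fun k _ _ ↦ hrest k (by omega)⟩

theorem isLocalRule_strongConnGraph (hD : NoRestorationDomain D) (hu : Unanimous φ)
    (hsp : StrategyProof φ) {c : Fin m → D} (hc : ∀ a, topOf (c a) = a) :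
    IsLocalRule (strongConnGraph D) fun (t : Fin n → Fin m) ↦ (φ fun i ↦ c (t i)).1 where
  mem_stdSimplex t := (φ fun i ↦ c (t i)).2
  unanimous a := by
    rw [hu _ a fun _ ↦ hc a]
    ext x
    simp [degLottery, Pi.single_apply]
  update t i b x hadj hx hxb := by
    obtain ⟨P, P', hP, hP', hPP'⟩ := StronglyConnected.exists_adjacent hadj
    have hrank : P.1.symm x = P'.1.symm x :=
      hPP'.symm_apply_eq_of_top_ne (hP ▸ hP' ▸ hadj.ne :) (hP ▸ hx :) (hP' ▸ hxb :)
    have updateTop {Q : D} {a : Fin m} (hQ : topOf Q = a) :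
        φ (fun j ↦ c (Function.update t i a j)) = φ (Function.update (fun j ↦ c (t j)) i Q) := by
      refine hsp.topsOnly hu hD _ _ fun j ↦ ?_
      by_cases hj : j = i <;> simp [hj, hc, hQ]
    rw [updateTop hP', ← hsp.apply_update_eq_of_adjacent _ i hPP' hrank, ← updateTop hP,
      Function.update_eq_self]

theorem exists_randomDictatorship_on_pathInterval (hrich : MinimallyRich D)
    (hD : NoRestorationDomain D) (hu : Unanimous φ) (hsp : StrategyProof φ)
    (hp : ((strongConnGraph D).neighborSet p ∩
      pathInterval (strongConnGraph D) p q).Nontrivial)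
    (hq : ((strongConnGraph D).neighborSet q ∩
      pathInterval (strongConnGraph D) p q).Nontrivial) :
    ∃ ε ∈ stdSimplex ℝ (Fin n), ∀ P : Profile D n,
      (∀ i, topOf (P i) ∈ pathInterval (strongConnGraph D) p q) →
        ∀ a, (φ P).1 a = ∑ i with topOf (P i) = a, ε i := by
  choose c hcD hc using hrich
  let c' (a : Fin m) : D := ⟨c a, hcD a⟩
  obtain ⟨ε, hε, hφ⟩ :=
    (isLocalRule_strongConnGraph hD hu hsp (c := c') hc).exists_randomDictatorship hp hq
  refine ⟨ε, hε, fun P hP a ↦ ?_⟩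
  rw [hsp.topsOnly hu hD P (fun i ↦ c' (topOf (P i))) fun i ↦ (hc _).symm]
  exact hφ a (fun i ↦ topOf (P i)) hP

theorem eq_top_of_prefers_second (h : Prefers P x (P 1)) : x = P 0 := by
  rw [Prefers, Equiv.symm_apply_apply, Fin.lt_def, Fin.coe_ofNat_eq_mod] at h
  have := Nat.mod_le 1 m
  rw [← Equiv.symm_apply_eq, Fin.ext_iff, Fin.val_zero]
  omega

namespace IsHybridPref

theorem second_le (hP : IsHybridPref p q P) (hpq : p < q) (htop : P 0 < p) : P 1 ≤ p := by
  obtain ⟨hpeak, hleft, -⟩ := hP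
  by_contra! hlt
  have hprefers : Prefers P p (P 1) := by
    rcases le_or_gt (P 1) q with hle | hgt
    · exact hleft htop.le _ hlt.le hle hlt.ne'
    · exact (hleft htop.le q hpq.le le_rfl hpq.ne').trans
        (hpeak _ _ (.inr ⟨hgt.le, le_rfl⟩) (.inr ⟨htop.trans hpq, hgt⟩))
  exact htop.ne' (eq_top_of_prefers_second hprefers)

theorem le_second (hP : IsHybridPref p q P) (hpq : p < q) (htop : q < P 0) : q ≤ P 1 := by
  obtain ⟨hpeak, -, hright⟩ := hP
  by_contra! hlt
  have hprefers : Prefers P q (P 1) := by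
    rcases le_or_gt p (P 1) with hle | hgt
    · exact hright htop.le _ hle hlt.le hlt.ne
    · exact (hright htop.le p le_rfl hpq.le hpq.ne).trans
        (hpeak _ _ (.inl ⟨hgt.le, le_rfl⟩) (.inl ⟨hgt, hpq.trans htop⟩))
  exact htop.ne (eq_top_of_prefers_second hprefers)

end IsHybridPref

theorem isGate_Iio (hD : D ⊆ hybridDomain p q) (hpq : p < q) :
    IsGate (strongConnGraph D) (Set.Iio p) p := by
  rintro a b ⟨-, P, hP, -, -, rfl, rfl, -⟩ ha hb
  exact ((hD hP).second_le hpq ha).eq_of_not_lt hb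

theorem isGate_Ioi (hD : D ⊆ hybridDomain p q) (hpq : p < q) :
    IsGate (strongConnGraph D) (Set.Ioi q) q := by
  rintro a b ⟨-, P, hP, -, -, rfl, rfl, -⟩ ha hb
  exact ((hD hP).le_second hpq ha).eq_of_not_lt' hb

theorem VertexPathBetween.mem_pathInterval {B : Set (Fin m)} (hl : VertexPathBetween D B a b l)
    (hk : k ∈ l) : k ∈ pathInterval (strongConnGraph D) a b := by
  obtain ⟨⟨hne, hnodup, -, hchain⟩, hhead, hlast⟩ := hl
  obtain rfl : l.head hne = a := by simpa [List.head?_eq_some_head hne] using hhead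
  obtain rfl : l.getLast hne = b := by simpa [List.getLast?_eq_some_getLast hne] using hlast
  have hchain' : l.IsChain (strongConnGraph D).Adj := hchain
  refine ⟨SimpleGraph.Walk.ofSupport l hne hchain', ?_, ?_⟩
  · rwa [SimpleGraph.Walk.isPath_def, SimpleGraph.Walk.support_ofSupport]
  · rwa [SimpleGraph.Walk.support_ofSupport]

namespace IsHybridStar

theorem mem_pathInterval_zero_lastAlt (h : IsHybridStar D p q) (hgap : (p : ℕ) + 1 < q)
    (k : Fin m) : k ∈ pathInterval (strongConnGraph D) 0 (lastAlt m) := by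
  have mem_of_interior (k : Fin m) (h0 : k ≠ 0) (hlast : k ≠ lastAlt m) :
      k ∈ pathInterval (strongConnGraph D) 0 (lastAlt m) :=
    let ⟨_, hl, hk⟩ := h.2.1 k h0 hlast
    hl.mem_pathInterval hk
  have hbetween := mem_of_interior ⟨p + 1, hgap.trans q.isLt⟩
    (by simp only [ne_eq, Fin.ext_iff, Fin.val_zero]; omega)
    (by simp only [lastAlt, ne_eq, Fin.ext_iff]; omega)
  rcases eq_or_ne k 0 with rfl | h0
  · exact left_mem_pathInterval hbetween
  rcases eq_or_ne k (lastAlt m) with rfl | hlast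
  · exact right_mem_pathInterval hbetween
  exact mem_of_interior k h0 hlast

theorem minimallyRich (h : IsHybridStar D p q) (hgap : (p : ℕ) + 1 < q) : MinimallyRich D := by
  intro a
  have hne : (0 : Fin m) ≠ lastAlt m := by
    simp only [lastAlt, ne_eq, Fin.ext_iff, Fin.val_zero]
    omega
  obtain ⟨b, -, P, hP, -, -, hP0, -⟩ :=
    exists_adj_of_mem_pathInterval hne (h.mem_pathInterval_zero_lastAlt hgap a)
  exact ⟨P, hP, hP0⟩

theorem Icc_subset_pathInterval (h : IsHybridStar D p q) (hgap : (p : ℕ) + 1 < q) :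
    Set.Icc p q ⊆ pathInterval (strongConnGraph D) p q := by
  have hpq : p < q := Fin.lt_def.2 (by omega)
  have hlast : q ≤ lastAlt m := Fin.le_def.2 (Nat.le_sub_one_of_lt q.isLt)
  exact fun k hk ↦ (isGate_Iio h.1 hpq).mem_pathInterval (isGate_Ioi h.1 hpq)
    (Fin.zero_le p).eq_or_lt (hlast.eq_or_lt.imp_left Eq.symm)
    (h.mem_pathInterval_zero_lastAlt hgap k) hk.1.not_gt hk.2.not_gt

theorem nontrivial_of_exists_adj (h : IsHybridStar D p q) (hgap : (p : ℕ) + 1 < q)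
    (ha : a ∈ Set.Icc p q) (hadj : ∃ b ∈ Set.Icc p q, (strongConnGraph D).Adj a b) :
    ((strongConnGraph D).neighborSet a ∩ pathInterval (strongConnGraph D) p q).Nontrivial := by
  obtain ⟨b, hb, hab⟩ := hadj
  by_contra hnot
  refine h.2.2 hgap a ⟨ha, b, ⟨hb, hab⟩, fun b' ⟨hb', hab'⟩ ↦ ?_⟩
  exact Set.not_nontrivial_iff.1 hnot ⟨hab', h.Icc_subset_pathInterval hgap hb'⟩
    ⟨hab, h.Icc_subset_pathInterval hgap hb⟩

theorem nontrivial_neighborSet_left (h : IsHybridStar D p q) (hgap : (p : ℕ) + 1 < q) :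
    ((strongConnGraph D).neighborSet p ∩ pathInterval (strongConnGraph D) p q).Nontrivial := by
  have hpq : p < q := Fin.lt_def.2 (by omega)
  have hp : p ∈ Set.Icc p q := Set.left_mem_Icc.2 hpq.le
  obtain ⟨b, hpb, hb, hb'⟩ := (isGate_Iio h.1 hpq).exists_adj_notMem (isGate_Ioi h.1 hpq)
    hpq.ne hpq.not_gt hpq.not_gt (h.Icc_subset_pathInterval hgap hp)
  exact h.nontrivial_of_exists_adj hgap hp ⟨b, ⟨not_lt.1 hb, not_lt.1 hb'⟩, hpb⟩

theorem nontrivial_neighborSet_right (h : IsHybridStar D p q) (hgap : (p : ℕ) + 1 < q) :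
    ((strongConnGraph D).neighborSet q ∩ pathInterval (strongConnGraph D) p q).Nontrivial := by
  have hpq : p < q := Fin.lt_def.2 (by omega)
  have hq : q ∈ Set.Icc p q := Set.right_mem_Icc.2 hpq.le
  obtain ⟨b, hqb, hb', hb⟩ := (isGate_Ioi h.1 hpq).exists_adj_notMem (isGate_Iio h.1 hpq)
    hpq.ne' hpq.not_gt hpq.not_gt
    (pathInterval_comm _ p q ▸ h.Icc_subset_pathInterval hgap hq)
  exact h.nontrivial_of_exists_adj hgap hq ⟨b, ⟨not_lt.1 hb, not_lt.1 hb'⟩, hqb⟩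

end IsHybridStar

end StrongConnectedness

end PFBRPaper

theorem random_dictatorship_on_middle_general {m n : ℕ} [NeZero m] {D : Set (Pref m)}
    {p q : Fin m} (hgap : (p : ℕ) + 1 < q) (hD : NoRestorationDomain D)
    (hstar : IsHybridStar D p q) (φ : Profile D n → Lottery m) (hu : Unanimous φ)
    (hsp : StrategyProof φ) :
    ∃ ε : Fin n → ℝ, (∀ i, 0 ≤ ε i) ∧ ∑ i, ε i = 1 ∧
      ∀ P : Profile D n, (∀ i, p ≤ topOf (P i) ∧ topOf (P i) ≤ q) →
        ∀ a : Fin m, (φ P).1 a = ∑ i with topOf (P i) = a, ε i := by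
  obtain ⟨ε, hε, hφ⟩ := exists_randomDictatorship_on_pathInterval (hstar.minimallyRich hgap) hD
    hu hsp (hstar.nontrivial_neighborSet_left hgap) (hstar.nontrivial_neighborSet_right hgap)
  exact ⟨ε, hε.1, hε.2, fun P hP ↦ hφ P fun i ↦ hstar.Icc_subset_pathInterval hgap (hP i)⟩

/-- On a regular `(p,q)`-hybrid* domain with `q - p > 1`, every unanimous
and strategy-proof RSCF behaves like a random dictatorship on the profiles whose tops all
lie in `M`. -/
theorem random_dictatorship_on_middle (m n : ℕ) [NeZero m] (hm : 3 ≤ m) (hn : 2 ≤ n)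
    (D : Set (Pref m)) (p q : Fin m) (hgap : (p : ℕ) + 1 < (q : ℕ))
    (hreg : RegularDomain D) (hstar : IsHybridStar D p q)
    (φ : Profile D n → Lottery m) (hu : Unanimous φ) (hsp : StrategyProof φ) :
    ∃ ε : Fin n → ℝ, (∀ i, 0 ≤ ε i) ∧ ∑ i, ε i = 1 ∧
      ∀ P : Profile D n, (∀ i, p ≤ topOf (P i) ∧ topOf (P i) ≤ q) →
        ∀ a : Fin m,
          (φ P).1 a = ∑ i ∈ Finset.univ.filter (fun i => topOf (P i) = a), ε i :=
  random_dictatorship_on_middle_general hgap hreg.2.2 hstar φ hu hsp
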